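/- arXiv:0807.3898 — 2 statements merged into one kernel-verified Lean document; each statement's English description precedes it below -/
import Mathlib

section
/- Let κ, θ, σ > 0, set ν := 2κθ/σ², and let G(x) := ∫ₓ^∞ π_{ν,θ}(y)/y dy. Fix ε > 0 and define f : (0,∞) → ℝ by f(x) = 1 for x ∈ (0, ε] and f(x) = π_{ν,θ}(ε)·G(x)/(G(ε)·π_{ν,θ}(x)) for x > ε. Then κ·∫₀^ε π_{ν,θ}(x) dx + (σ²/2)·∫_ε^∞ π_{ν,θ}(x)·[ x·f'(x)² + (ν/θ)·f(x)² ] dx = κ·∫₀^ε π_{ν,θ}(x) dx + (σ²/2)·π_{ν,θ}(ε)²/G(ε) + (σ²/2)·π_{ν,θ}(ε)·(ν − 1 − νε/θ). -/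
open Real MeasureTheory Set

/-- Gamma density with shape `ν` and rate `ν/θ`. -/
noncomputable def piDens (ν θ x : ℝ) : ℝ :=
  ((ν / θ) ^ ν / Real.Gamma ν) * x ^ (ν - 1) * Real.exp (-ν * x / θ)

/-- The function `G(x) = ∫ₓ^∞ π_{ν,θ}(y)/y dy`. -/
noncomputable def Gfun (ν θ x : ℝ) : ℝ :=
  ∫ y in Set.Ioi x, piDens ν θ y / y

/-!
Put `w x = x ^ (ν - 1) * exp (-(ν / θ) * x)` and `T x = ∫ y in Ioi x, w y / y`. The quotient
`u = T / w` solves the Euler–Lagrange equation `(x w u')' = (ν / θ) w u` of the energy, so the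
energy density `w (x u'² + (ν / θ) u²)` is the derivative of `x w u' u`. By L'Hôpital `x T / w` has
a finite limit at infinity, so that product vanishes there, and the energy of `u / u(ε)` on
`(ε, ∞)` is the boundary flux `-ε w(ε) u'(ε) / u(ε)`.
-/

open Filter Topology

lemma integral_Ioi_energy_eq_neg_flux_mul {u u' F q r : ℝ → ℝ} {a : ℝ}
    (hu : ∀ x ∈ Ici a, HasDerivAt u (u' x) x)
    (hF : ∀ x ∈ Ici a, HasDerivAt F (r x * u x) x)
    (hFq : ∀ x ∈ Ioi a, F x = q x * u' x)
    (hq : ∀ x ∈ Ioi a, 0 ≤ q x) (hr : ∀ x ∈ Ioi a, 0 ≤ r x)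
    (hlim : Tendsto (fun x => F x * u x) atTop (𝓝 0)) :
    ∫ x in Ioi a, (q x * u' x ^ 2 + r x * u x ^ 2) = -(F a * u a) := by
  have hderiv : ∀ x ∈ Ici a,
      HasDerivAt (fun x => F x * u x) (r x * u x * u x + F x * u' x) x :=
    fun x hx => (hF x hx).mul (hu x hx)
  have hdensity : ∀ x ∈ Ioi a,
      r x * u x * u x + F x * u' x = q x * u' x ^ 2 + r x * u x ^ 2 := fun x hx => by
    rw [hFq x hx]; ring
  have hnonneg : ∀ x ∈ Ioi a, 0 ≤ r x * u x * u x + F x * u' x := fun x hx => by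
    have := hq x hx
    have := hr x hx
    rw [hdensity x hx]; positivity
  rw [← setIntegral_congr_fun measurableSet_Ioi hdensity,
    integral_Ioi_of_hasDerivAt_of_nonneg' hderiv hnonneg hlim, zero_sub]

lemma hasDerivAt_integral_Ioi {f : ℝ → ℝ} {a x : ℝ} (hf : IntegrableOn f (Ioi a))
    (hcont : ContinuousOn f (Ioi a)) (hx : a < x) :
    HasDerivAt (fun y => ∫ t in Ioi y, f t) (-f x) x := by
  have hprim : HasDerivAt (fun y => ∫ t in a..y, f t) (f x) x :=
    intervalIntegral.integral_hasDerivAt_right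
      ((intervalIntegrable_iff_integrableOn_Ioc_of_le hx.le).2 (hf.mono_set Ioc_subset_Ioi_self))
      (hcont.stronglyMeasurableAtFilter isOpen_Ioi x hx)
      (hcont.continuousAt (Ioi_mem_nhds hx))
  refine (hprim.const_sub (∫ t in Ioi a, f t)).congr_of_eventuallyEq ?_
  filter_upwards [Ioi_mem_nhds hx] with y hy
  rw [← intervalIntegral.integral_Ioi_sub_Ioi hf hy.le, sub_sub_cancel]

/-- The Gamma density with exponent `a` and rate `b`, without its normalizing constant; `a` may be
any real number, since only half-lines away from `0` matter. -/
noncomputable def gammaWeight (a b x : ℝ) : ℝ := x ^ a * exp (-b * x)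

/-- The tail integral of `gammaWeight`, an unnormalized upper incomplete Gamma function. -/
noncomputable def gammaTail (a b x : ℝ) : ℝ := ∫ y in Ioi x, gammaWeight a b y

/-- The solution `u` of `(x w u')' = b w u` with `w = gammaWeight a b` that vanishes at infinity.
Divided by `u(ε)` it is the minimizer of the capacity problem for `[0, ε)`, outside that set. -/
noncomputable def gammaPotential (a b x : ℝ) : ℝ := gammaTail (a - 1) b x / gammaWeight a b x

/-- The flux `x w u'` of `u = gammaPotential a b` with respect to `w = gammaWeight a b`, in the
closed form obtained by differentiating the quotient. -/
noncomputable def gammaFlux (a b x : ℝ) : ℝ :=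
  -(gammaWeight a b x + (a - b * x) * gammaTail (a - 1) b x)

section Gamma

variable {a b x : ℝ}

lemma gammaWeight_pos (hx : 0 < x) : 0 < gammaWeight a b x :=
  mul_pos (rpow_pos_of_pos hx a) (exp_pos _)

lemma gammaWeight_sub_one (hx : 0 < x) : gammaWeight (a - 1) b x = gammaWeight a b x / x := by
  rw [gammaWeight, gammaWeight, rpow_sub_one hx.ne', div_mul_eq_mul_div]

lemma hasDerivAt_gammaWeight (hx : 0 < x) :
    HasDerivAt (gammaWeight a b) (gammaWeight a b x * (a / x - b)) x := by
  have hexp : HasDerivAt (fun y => exp (-b * y)) (exp (-b * x) * (-b * 1)) x :=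
    ((hasDerivAt_id' x).const_mul (-b)).exp
  refine ((hasDerivAt_rpow_const (p := a) (Or.inl hx.ne')).mul hexp).congr_deriv ?_
  rw [gammaWeight, rpow_sub_one hx.ne']
  ring

lemma continuousOn_gammaWeight : ContinuousOn (gammaWeight a b) (Ioi 0) := fun _ hx =>
  (hasDerivAt_gammaWeight hx).continuousAt.continuousWithinAt

lemma tendsto_gammaWeight_atTop (hb : 0 < b) : Tendsto (gammaWeight a b) atTop (𝓝 0) :=
  tendsto_rpow_mul_exp_neg_mul_atTop_nhds_zero a b hb

lemma gammaWeight_isBigO_exp_neg (hb : 0 < b) :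
    gammaWeight a b =O[atTop] fun x => exp (-(b / 2) * x) := by
  refine ((isLittleO_rpow_exp_pos_mul_atTop a (half_pos hb)).isBigO.mul
    (Asymptotics.isBigO_refl (fun x => exp (-b * x)) atTop)).congr_right fun x => ?_
  rw [← exp_add]
  ring_nf

lemma integrableOn_gammaWeight (hb : 0 < b) (hx : 0 < x) :
    IntegrableOn (gammaWeight a b) (Ioi x) :=
  integrable_of_isBigO_exp_neg (half_pos hb)
    (continuousOn_gammaWeight.mono (Ici_subset_Ioi.2 hx)) (gammaWeight_isBigO_exp_neg hb)

lemma gammaTail_pos (hb : 0 < b) (hx : 0 < x) : 0 < gammaTail a b x := by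
  have hpos : ∀ y ∈ Ioi x, 0 < gammaWeight a b y := fun y hy => gammaWeight_pos (hx.trans hy)
  have hsupp : Function.support (gammaWeight a b) ∩ Ioi x = Ioi x :=
    inter_eq_right.2 fun y hy => (hpos y hy).ne'
  rw [gammaTail, setIntegral_pos_iff_support_of_nonneg_ae
    (ae_restrict_of_forall_mem measurableSet_Ioi fun y hy => (hpos y hy).le)
    (integrableOn_gammaWeight hb hx), hsupp, volume_Ioi]
  exact ENNReal.zero_lt_top

lemma hasDerivAt_gammaTail (hb : 0 < b) (hx : 0 < x) :
    HasDerivAt (gammaTail a b) (-gammaWeight a b x) x :=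
  hasDerivAt_integral_Ioi (integrableOn_gammaWeight hb (half_pos hx))
    (continuousOn_gammaWeight.mono (Ioi_subset_Ioi (half_pos hx).le)) (half_lt_self hx)

lemma tendsto_gammaTail_atTop : Tendsto (gammaTail a b) atTop (𝓝 0) :=
  tendsto_integral_Ioi_zero tendsto_id

lemma tendsto_const_div_sub_atTop : Tendsto (fun x => a / x - b) atTop (𝓝 (-b)) := by
  simpa using (tendsto_const_nhds.div_atTop tendsto_id).sub_const b

lemma tendsto_gammaTail_div_gammaWeight_atTop (hb : 0 < b) :
    Tendsto (fun x => gammaTail a b x / gammaWeight a b x) atTop (𝓝 b⁻¹) := by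
  have hlogDeriv : Tendsto (fun x => a / x - b) atTop (𝓝 (-b)) := tendsto_const_div_sub_atTop
  have hlogDeriv_ne : ∀ᶠ x in atTop, a / x - b ≠ 0 := hlogDeriv.eventually_ne (neg_ne_zero.2 hb.ne')
  have hratio : Tendsto (fun x => -gammaWeight a b x / (gammaWeight a b x * (a / x - b))) atTop
      (𝓝 b⁻¹) := by
    have hinv := (hlogDeriv.inv₀ (neg_ne_zero.2 hb.ne')).neg
    rw [inv_neg, neg_neg] at hinv
    refine hinv.congr' ?_
    filter_upwards [eventually_gt_atTop 0] with x hx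
    rw [neg_div, div_mul_cancel_left₀ (gammaWeight_pos hx).ne']
  refine HasDerivAt.lhopital_zero_atTop ?_ ?_ ?_ tendsto_gammaTail_atTop
    (tendsto_gammaWeight_atTop hb) hratio
  · filter_upwards [eventually_gt_atTop 0] with x hx using hasDerivAt_gammaTail hb hx
  · filter_upwards [eventually_gt_atTop 0] with x hx using hasDerivAt_gammaWeight hx
  · filter_upwards [eventually_gt_atTop 0, hlogDeriv_ne] with x hx hne
    exact mul_ne_zero (gammaWeight_pos hx).ne' hne

lemma hasDerivAt_gammaPotential (hb : 0 < b) (hx : 0 < x) :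
    HasDerivAt (gammaPotential a b) (gammaFlux a b x / (x * gammaWeight a b x)) x := by
  have hw := (gammaWeight_pos (a := a) (b := b) hx).ne'
  refine ((hasDerivAt_gammaTail hb hx).div (hasDerivAt_gammaWeight hx) hw).congr_deriv ?_
  rw [gammaFlux, gammaWeight_sub_one hx]
  field_simp
  ring

lemma hasDerivAt_gammaFlux (hb : 0 < b) (hx : 0 < x) :
    HasDerivAt (gammaFlux a b) (b * gammaWeight a b x * gammaPotential a b x) x := by
  have hw := (gammaWeight_pos (a := a) (b := b) hx).ne'
  have hlin : HasDerivAt (fun y => a - b * y) (-(b * 1)) x :=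
    ((hasDerivAt_id' x).const_mul b).const_sub a
  refine ((hasDerivAt_gammaWeight hx).add
    (hlin.mul (hasDerivAt_gammaTail hb hx))).neg.congr_deriv ?_
  rw [gammaPotential, gammaWeight_sub_one hx]
  field_simp
  ring

lemma tendsto_gammaFlux_mul_gammaPotential_atTop (hb : 0 < b) :
    Tendsto (fun x => gammaFlux a b x * gammaPotential a b x) atTop (𝓝 0) := by
  have hT : Tendsto (gammaTail (a - 1) b) atTop (𝓝 0) := tendsto_gammaTail_atTop
  have hlim := (hT.mul
    ((tendsto_gammaTail_div_gammaWeight_atTop (a := a - 1) hb).mul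
      (tendsto_const_div_sub_atTop (a := a) (b := b)) |>.const_add 1)).neg
  rw [zero_mul, neg_zero] at hlim
  refine hlim.congr' ?_
  filter_upwards [eventually_gt_atTop 0] with x hx
  have hw := (gammaWeight_pos (a := a) (b := b) hx).ne'
  rw [gammaFlux, gammaPotential, gammaWeight_sub_one hx]
  field_simp

lemma integral_gammaPotential_energy (hb : 0 < b) {ε : ℝ} (hε : 0 < ε) :
    ∫ x in Ioi ε, gammaWeight a b x *
        (x * deriv (gammaPotential a b) x ^ 2 + b * gammaPotential a b x ^ 2)
      = -(gammaFlux a b ε * gammaPotential a b ε) := by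
  have hw : ∀ x ∈ Ioi ε, 0 < gammaWeight a b x := fun x hx => gammaWeight_pos (hε.trans hx)
  have hderiv : ∀ x ∈ Ici ε, HasDerivAt (gammaPotential a b)
      (gammaFlux a b x / (x * gammaWeight a b x)) x :=
    fun x hx => hasDerivAt_gammaPotential hb (hε.trans_le hx)
  rw [← integral_Ioi_energy_eq_neg_flux_mul (q := fun x => x * gammaWeight a b x)
    (r := fun x => b * gammaWeight a b x)
    (fun x hx => (hderiv x hx).differentiableAt.hasDerivAt)
    (fun x hx => hasDerivAt_gammaFlux hb (hε.trans_le hx))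
    (fun x hx => ?_)
    (fun x hx => (mul_pos (hε.trans hx) (hw x hx)).le)
    (fun x hx => (mul_pos hb (hw x hx)).le)
    (tendsto_gammaFlux_mul_gammaPotential_atTop hb)]
  · congr 1 with x
    ring
  · rw [(hderiv x (Ioi_subset_Ici_self hx)).deriv,
      mul_div_cancel₀ _ (mul_pos (hε.trans hx) (hw x hx)).ne']

lemma integral_gammaWeight_energy_of_eqOn (hb : 0 < b) {ε : ℝ} (hε : 0 < ε) {f : ℝ → ℝ}
    (hf : EqOn f (fun x => gammaPotential a b x / gammaPotential a b ε) (Ioi ε)) :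
    ∫ x in Ioi ε, gammaWeight a b x * (x * deriv f x ^ 2 + b * f x ^ 2)
      = gammaWeight a b ε ^ 2 / gammaTail (a - 1) b ε + gammaWeight a b ε * (a - b * ε) := by
  have hw := (gammaWeight_pos (a := a) (b := b) hε).ne'
  have hT := (gammaTail_pos (a := a - 1) hb hε).ne'
  have hscale : ∀ x ∈ Ioi ε, gammaWeight a b x * (x * deriv f x ^ 2 + b * f x ^ 2)
      = (gammaPotential a b ε ^ 2)⁻¹ * (gammaWeight a b x *
        (x * deriv (gammaPotential a b) x ^ 2 + b * gammaPotential a b x ^ 2)) := fun x hx => by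
    rw [hf.deriv isOpen_Ioi hx, hf hx, deriv_div_const]
    ring
  rw [setIntegral_congr_fun measurableSet_Ioi hscale, integral_const_mul,
    integral_gammaPotential_energy hb hε, gammaFlux, gammaPotential]
  field_simp

end Gamma

lemma piDens_eq_const_mul_gammaWeight (ν θ x : ℝ) :
    piDens ν θ x = (ν / θ) ^ ν / Gamma ν * gammaWeight (ν - 1) (ν / θ) x := by
  rw [piDens, gammaWeight, mul_assoc, neg_mul, neg_mul, neg_div, mul_div_right_comm]

lemma Gfun_eq_const_mul_gammaTail (ν θ : ℝ) {x : ℝ} (hx : 0 < x) :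
    Gfun ν θ x = (ν / θ) ^ ν / Gamma ν * gammaTail (ν - 1 - 1) (ν / θ) x := by
  rw [Gfun, gammaTail, ← integral_const_mul]
  refine setIntegral_congr_fun measurableSet_Ioi fun y hy => ?_
  simp only [piDens_eq_const_mul_gammaWeight, gammaWeight_sub_one (hx.trans hy), mul_div_assoc]

lemma integral_piDens_energy {ν θ ε : ℝ} (hν : 0 < ν) (hθ : 0 < θ) (hε : 0 < ε) {f : ℝ → ℝ}
    (hf : ∀ x ∈ Ioi ε, f x = piDens ν θ ε * Gfun ν θ x / (Gfun ν θ ε * piDens ν θ x)) :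
    ∫ x in Ioi ε, piDens ν θ x * (x * deriv f x ^ 2 + ν / θ * f x ^ 2)
      = piDens ν θ ε ^ 2 / Gfun ν θ ε + piDens ν θ ε * (ν - 1 - ν * ε / θ) := by
  have hb : 0 < ν / θ := div_pos hν hθ
  have hC : (ν / θ) ^ ν / Gamma ν ≠ 0 :=
    (div_pos (rpow_pos_of_pos hb ν) (Gamma_pos_of_pos hν)).ne'
  have hfu : EqOn f (fun x => gammaPotential (ν - 1) (ν / θ) x /
      gammaPotential (ν - 1) (ν / θ) ε) (Ioi ε) := fun x hx => by
    simp only [hf x hx, Gfun_eq_const_mul_gammaTail ν θ hε,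
      Gfun_eq_const_mul_gammaTail ν θ (hε.trans hx), piDens_eq_const_mul_gammaWeight,
      gammaPotential]
    have := (gammaWeight_pos (a := ν - 1) (b := ν / θ) hε).ne'
    have := (gammaWeight_pos (a := ν - 1) (b := ν / θ) (hε.trans hx)).ne'
    have := (gammaTail_pos (a := ν - 1 - 1) hb hε).ne'
    generalize (ν / θ) ^ ν / Gamma ν = C at *
    field_simp
  simp only [piDens_eq_const_mul_gammaWeight, mul_assoc, integral_const_mul,
    integral_gammaWeight_energy_of_eqOn hb hε hfu, Gfun_eq_const_mul_gammaTail ν θ hε]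
  generalize (ν / θ) ^ ν / Gamma ν = C at *
  field_simp

theorem cir_capacity_value_of_minimizer
    (κ θ σ ν : ℝ) (hκ : 0 < κ) (hθ : 0 < θ) (hσ : 0 < σ)
    (hν : ν = 2 * κ * θ / σ ^ 2)
    (ε : ℝ) (hε : 0 < ε)
    (f : ℝ → ℝ)
    (hf1 : ∀ x ∈ Set.Ioc (0:ℝ) ε, f x = 1)
    (hf2 : ∀ x ∈ Set.Ioi ε,
      f x = piDens ν θ ε * Gfun ν θ x / (Gfun ν θ ε * piDens ν θ x)) :
    κ * (∫ x in (0:ℝ)..ε, piDens ν θ x)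
      + σ ^ 2 / 2 * ∫ x in Set.Ioi ε,
          piDens ν θ x * (x * (deriv f x) ^ 2 + ν / θ * (f x) ^ 2)
    = κ * (∫ x in (0:ℝ)..ε, piDens ν θ x)
      + σ ^ 2 / 2 * (piDens ν θ ε) ^ 2 / Gfun ν θ ε
      + σ ^ 2 / 2 * piDens ν θ ε * (ν - 1 - ν * ε / θ) := by
  have hν_pos : 0 < ν := by rw [hν]; positivity
  rw [integral_piDens_energy hν_pos hθ hε hf2]
  ring
end

section
/- Let κ, θ, σ > 0, set ν := 2κθ/σ², let G(x) := ∫ₓ^∞ π_{ν,θ}(y)/y dy, and define Φ(ε) := κ·∫₀^ε π_{ν,θ}(x) dx + (σ²/2)·π_{ν,θ}(ε)²/G(ε) + (σ²/2)·π_{ν,θ}(ε)·(ν − 1 − νε/θ) for ε > 0. If 0 < ν < 1, then Φ(ε) tends to κ·(1 − ν) as ε tends to 0 from the right. (This is the statement that for ν < 1 the capacity of the origin equals κ(1 − ν) > 0, so the univariate CIR process hits the origin.) -/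
open Real MeasureTheory Set Filter

/-!
Writing `π` for the density, integrating `π' = (ν - 1) π / y - (ν / θ) π` over `(ε, ∞)` gives
`(1 - ν) G(ε) = π(ε) - (ν / θ) ∫_ε^∞ π`. The last two terms of the capacity combine to
`(σ² / 2) (π / G) (π - (1 - ν) G) - κ ε π`, so this identity turns the capacity into
`κ (∫_0^ε π + (∫_ε^∞ π) · π(ε) / G(ε) - ε π(ε))`, whose only nontrivial limit is that of `π / G`.
For `ν < 1` the density blows up at the origin, hence so does `G`, and dividing the same identity
by `G` shows that `π / G` tends to `1 - ν`.
-/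

open scoped Topology

lemma integrableOn_Ioi_div_id {f : ℝ → ℝ} {a : ℝ} (ha : 0 < a) (hf : IntegrableOn f (Ioi a)) :
    IntegrableOn (fun y ↦ f y / y) (Ioi a) := by
  simp only [div_eq_mul_inv]
  refine hf.mul_bdd (c := a⁻¹) measurable_inv.aestronglyMeasurable ?_
  filter_upwards [ae_restrict_mem measurableSet_Ioi] with y (hy : a < y)
  rw [norm_inv, Real.norm_of_nonneg (ha.trans hy).le]
  gcongr

lemma setIntegral_Ioi_pos {f : ℝ → ℝ} {a : ℝ} (hf : IntegrableOn f (Ioi a))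
    (hpos : ∀ x ∈ Ioi a, 0 < f x) : 0 < ∫ x in Ioi a, f x := by
  have hnonneg : 0 ≤ᵐ[volume.restrict (Ioi a)] f :=
    ae_restrict_of_forall_mem measurableSet_Ioi fun x hx ↦ (hpos x hx).le
  have hsupp : Ioi a ⊆ Function.support f := fun x hx ↦ (hpos x hx).ne'
  rw [setIntegral_pos_iff_support_of_nonneg_ae hnonneg hf, inter_eq_right.2 hsupp,
    Real.volume_Ioi]
  exact ENNReal.zero_lt_top

section Density

variable {ν θ : ℝ}

lemma piDens_eq_const_mul (ν θ x : ℝ) :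
    piDens ν θ x = (ν / θ) ^ ν / Gamma ν * (x ^ (ν - 1) * exp (-(ν / θ) * x)) := by
  rw [piDens, mul_assoc, mul_div_right_comm, neg_div]

lemma piDens_pos {x : ℝ} (hθ : 0 < θ) (hν : 0 < ν) (hx : 0 < x) : 0 < piDens ν θ x := by
  unfold piDens
  positivity

lemma hasDerivAt_piDens {x : ℝ} (hx : x ≠ 0) :
    HasDerivAt (piDens ν θ) ((ν - 1) * (piDens ν θ x / x) - ν / θ * piDens ν θ x) x := by
  have hpow : HasDerivAt (fun y : ℝ ↦ y ^ (ν - 1)) ((ν - 1) * x ^ (ν - 1 - 1)) x :=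
    hasDerivAt_rpow_const (Or.inl hx)
  have hexp : HasDerivAt (fun y ↦ exp (-ν * y / θ)) (exp (-ν * x / θ) * (-ν * 1 / θ)) x :=
    (((hasDerivAt_id x).const_mul (-ν)).div_const θ).exp
  refine ((hpow.const_mul ((ν / θ) ^ ν / Gamma ν)).mul hexp).congr_deriv ?_
  rw [rpow_sub_one hx (ν - 1), piDens]
  ring

lemma tendsto_piDens_atTop (h : 0 < ν / θ) : Tendsto (piDens ν θ) atTop (𝓝 0) := by
  simpa only [← piDens_eq_const_mul, mul_zero] using
    (tendsto_rpow_mul_exp_neg_mul_atTop_nhds_zero (ν - 1) (ν / θ) h).const_mul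
      ((ν / θ) ^ ν / Gamma ν)

lemma integral_Ioi_piDens (hθ : 0 < θ) (hν : 0 < ν) : ∫ x in Ioi 0, piDens ν θ x = 1 := by
  have hrate : 0 < ν / θ := by positivity
  simp only [piDens_eq_const_mul, neg_mul]
  rw [integral_const_mul, integral_rpow_mul_exp_neg_mul_Ioi hν hrate, one_div,
    inv_rpow hrate.le, div_mul_eq_mul_div, mul_inv_cancel_left₀ (rpow_pos_of_pos hrate ν).ne',
    div_self (Gamma_pos_of_pos hν).ne']

lemma integrableOn_piDens (hθ : 0 < θ) (hν : 0 < ν) : IntegrableOn (piDens ν θ) (Ioi 0) :=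
  .of_integral_ne_zero (by rw [integral_Ioi_piDens hθ hν]; exact one_ne_zero)

lemma intervalIntegrable_piDens (hν : 0 < ν) (a b : ℝ) :
    IntervalIntegrable (piDens ν θ) volume a b := by
  have hpow : IntervalIntegrable (fun x : ℝ ↦ x ^ (ν - 1)) volume a b :=
    intervalIntegral.intervalIntegrable_rpow' (by linarith)
  exact (hpow.const_mul _).mul_continuousOn (by fun_prop)

lemma tendsto_integral_piDens_nhdsGT_zero (hν : 0 < ν) :
    Tendsto (fun ε ↦ ∫ x in (0 : ℝ)..ε, piDens ν θ x) (𝓝[>] 0) (𝓝 0) :=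
  ((intervalIntegral.continuous_primitive (intervalIntegrable_piDens hν) 0).tendsto' 0 0
    intervalIntegral.integral_same).mono_left nhdsWithin_le_nhds

lemma tendsto_integral_Ioi_piDens_nhdsGT_zero (hθ : 0 < θ) (hν : 0 < ν) :
    Tendsto (fun ε ↦ ∫ x in Ioi ε, piDens ν θ x) (𝓝[>] 0) (𝓝 1) := by
  have hlim := (tendsto_integral_piDens_nhdsGT_zero (θ := θ) hν).const_sub 1
  rw [sub_zero] at hlim
  refine hlim.congr' ?_
  filter_upwards [self_mem_nhdsWithin] with ε hε
  rw [← intervalIntegral.integral_Ioi_sub_Ioi (integrableOn_piDens hθ hν) (le_of_lt hε),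
    integral_Ioi_piDens hθ hν, sub_sub_cancel]

lemma tendsto_exp_nhdsGT_zero (ν θ : ℝ) :
    Tendsto (fun x ↦ exp (-ν * x / θ)) (𝓝[>] 0) (𝓝 1) := by
  have hcont : Continuous fun x ↦ exp (-ν * x / θ) := by fun_prop
  exact (hcont.tendsto' 0 1 (by simp)).mono_left nhdsWithin_le_nhds

lemma tendsto_piDens_nhdsGT_zero (hθ : 0 < θ) (hν : 0 < ν) (hν1 : ν < 1) :
    Tendsto (piDens ν θ) (𝓝[>] 0) atTop := by
  have hpow : Tendsto (fun x : ℝ ↦ x ^ (ν - 1)) (𝓝[>] 0) atTop :=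
    tendsto_rpow_neg_nhdsGT_zero (sub_neg.2 hν1)
  have hconst : 0 < (ν / θ) ^ ν / Gamma ν := by positivity
  exact (hpow.const_mul_atTop hconst).atTop_mul_pos one_pos (tendsto_exp_nhdsGT_zero ν θ)

lemma tendsto_mul_piDens_nhdsGT_zero (hν : 0 < ν) :
    Tendsto (fun x ↦ x * piDens ν θ x) (𝓝[>] 0) (𝓝 0) := by
  have hpow : Tendsto (fun x : ℝ ↦ x ^ ν) (𝓝[>] 0) (𝓝 0) :=
    ((continuous_rpow_const hν.le).tendsto' 0 0 (zero_rpow hν.ne')).mono_left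
      nhdsWithin_le_nhds
  have hlim := (hpow.const_mul ((ν / θ) ^ ν / Gamma ν)).mul (tendsto_exp_nhdsGT_zero ν θ)
  rw [mul_zero, zero_mul] at hlim
  refine hlim.congr' ?_
  filter_upwards [self_mem_nhdsWithin] with x (hx : 0 < x)
  rw [piDens, rpow_sub_one hx.ne']
  field_simp

end Density

section Gfun

variable {ν θ ε : ℝ}

lemma integrableOn_piDens_div_id (hθ : 0 < θ) (hν : 0 < ν) (hε : 0 < ε) :
    IntegrableOn (fun y ↦ piDens ν θ y / y) (Ioi ε) :=
  integrableOn_Ioi_div_id hε ((integrableOn_piDens hθ hν).mono_set (Ioi_subset_Ioi hε.le))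

lemma Gfun_pos (hθ : 0 < θ) (hν : 0 < ν) (hε : 0 < ε) : 0 < Gfun ν θ ε :=
  setIntegral_Ioi_pos (integrableOn_piDens_div_id hθ hν hε) fun _ hy ↦
    div_pos (piDens_pos hθ hν (hε.trans hy)) (hε.trans hy)

lemma one_sub_mul_Gfun (hθ : 0 < θ) (hν : 0 < ν) (hε : 0 < ε) :
    (1 - ν) * Gfun ν θ ε = piDens ν θ ε - ν / θ * ∫ x in Ioi ε, piDens ν θ x := by
  have hπ := ((integrableOn_piDens hθ hν).mono_set (Ioi_subset_Ioi hε.le)).const_mul (ν / θ)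
  have hG := (integrableOn_piDens_div_id hθ hν hε).const_mul (ν - 1)
  have hderiv : ∫ y in Ioi ε, ((ν - 1) * (piDens ν θ y / y) - ν / θ * piDens ν θ y)
      = 0 - piDens ν θ ε :=
    integral_Ioi_of_hasDerivAt_of_tendsto' (fun _ hy ↦ hasDerivAt_piDens (hε.trans_le hy).ne')
      (hG.sub hπ) (tendsto_piDens_atTop (by positivity))
  rw [integral_sub hG hπ, integral_const_mul, integral_const_mul] at hderiv
  rw [Gfun]
  linarith

lemma tendsto_Gfun_nhdsGT_zero (hθ : 0 < θ) (hν : 0 < ν) (hν1 : ν < 1) :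
    Tendsto (Gfun ν θ) (𝓝[>] 0) atTop := by
  have htail := ((tendsto_integral_Ioi_piDens_nhdsGT_zero hθ hν).const_mul (ν / θ)).neg
  refine (((tendsto_piDens_nhdsGT_zero hθ hν hν1).atTop_add htail).atTop_div_const
    (sub_pos.2 hν1)).congr' ?_
  filter_upwards [self_mem_nhdsWithin] with ε hε
  rw [← sub_eq_add_neg, ← one_sub_mul_Gfun hθ hν hε, mul_div_cancel_left₀ _ (sub_pos.2 hν1).ne']

lemma tendsto_piDens_div_Gfun_nhdsGT_zero (hθ : 0 < θ) (hν : 0 < ν) (hν1 : ν < 1) :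
    Tendsto (fun ε ↦ piDens ν θ ε / Gfun ν θ ε) (𝓝[>] 0) (𝓝 (1 - ν)) := by
  have htail := ((tendsto_integral_Ioi_piDens_nhdsGT_zero hθ hν).const_mul (ν / θ)).div_atTop
    (tendsto_Gfun_nhdsGT_zero hθ hν hν1)
  have hlim := htail.const_add (1 - ν)
  rw [add_zero] at hlim
  refine hlim.congr' ?_
  filter_upwards [self_mem_nhdsWithin] with ε hε
  rw [← eq_sub_iff_add_eq.1 (one_sub_mul_Gfun hθ hν hε), add_div,
    mul_div_cancel_right₀ _ (Gfun_pos hθ hν hε).ne']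

lemma mul_sq_piDens_div_Gfun_add (hθ : 0 < θ) (hν : 0 < ν) (hε : 0 < ε) (c : ℝ) :
    c * piDens ν θ ε ^ 2 / Gfun ν θ ε + c * piDens ν θ ε * (ν - 1 - ν * ε / θ)
      = c * (ν / θ) * ((∫ x in Ioi ε, piDens ν θ x) * (piDens ν θ ε / Gfun ν θ ε)
          - ε * piDens ν θ ε) := by
  have hG := (Gfun_pos hθ hν hε).ne'
  have htail : ν / θ * ∫ x in Ioi ε, piDens ν θ x = piDens ν θ ε - (1 - ν) * Gfun ν θ ε := by
    linarith [one_sub_mul_Gfun hθ hν hε]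
  calc
    _ = c * ((piDens ν θ ε - (1 - ν) * Gfun ν θ ε) * (piDens ν θ ε / Gfun ν θ ε)
          - ν / θ * (ε * piDens ν θ ε)) := by field_simp; ring
    _ = _ := by rw [← htail]; ring

end Gfun

theorem cir_capacity_origin_positive
    (κ θ σ ν : ℝ) (hκ : 0 < κ) (hθ : 0 < θ) (hσ : 0 < σ)
    (hν : ν = 2 * κ * θ / σ ^ 2) (hν0 : 0 < ν) (hν1 : ν < 1)
    (Φ : ℝ → ℝ)
    (hΦ : ∀ ε > (0:ℝ),
      Φ ε = κ * (∫ x in (0:ℝ)..ε, piDens ν θ x)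
        + σ ^ 2 / 2 * (piDens ν θ ε) ^ 2 / Gfun ν θ ε
        + σ ^ 2 / 2 * piDens ν θ ε * (ν - 1 - ν * ε / θ)) :
    Filter.Tendsto Φ (nhdsWithin 0 (Set.Ioi 0)) (nhds (κ * (1 - ν))) := by
  have hκ_eq : σ ^ 2 / 2 * (ν / θ) = κ := by rw [hν]; field_simp
  have hbracket := ((tendsto_integral_Ioi_piDens_nhdsGT_zero hθ hν0).mul
    (tendsto_piDens_div_Gfun_nhdsGT_zero hθ hν0 hν1)).sub
      (tendsto_mul_piDens_nhdsGT_zero (θ := θ) hν0)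
  have hlim := ((tendsto_integral_piDens_nhdsGT_zero (θ := θ) hν0).const_mul κ).add
    (hbracket.const_mul κ)
  rw [mul_zero, zero_add, one_mul, sub_zero] at hlim
  refine hlim.congr' ?_
  filter_upwards [self_mem_nhdsWithin] with ε hε
  rw [hΦ ε hε, add_assoc, mul_sq_piDens_div_Gfun_add hθ hν0 hε, hκ_eq]
end
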